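/- Let G=(V,E) be a Bonnet-Myers sharp graph of diameter 2 and let x,y∈V with x∼y and d_x=d_y. Then there exists at most one vertex x'∈V∖{x,y} with x∼x' and y≁x'. Furthermore, if such an x' exists, then there exists y'∈V∖{x,y} with y∼y', x≁y' and x'∼y'. -/

import Mathlib

open scoped Classical
open Finset

noncomputable section

/-- The degree of a vertex `x` in the graph `G`. -/
def deg {V : Type*} [Fintype V] (G : SimpleGraph V) (x : V) : ℕ :=
  (Finset.univ.filter (fun y => G.Adj x y)).card

/-- The diameter of `G`: the maximum of the combinatorial distance over all pairs of vertices. -/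
def diam {V : Type*} [Fintype V] (G : SimpleGraph V) : ℕ :=
  Finset.univ.sup (fun xy : V × V => G.dist xy.1 xy.2)

/-- The probability measure `μ_x^p` of the lazy simple random walk at `x` with idleness `p`. -/
def mu {V : Type*} [Fintype V] (G : SimpleGraph V) (p : ℝ) (x : V) : V → ℝ :=
  fun z => if z = x then p else if G.Adj x z then (1 - p) / (deg G x : ℝ) else 0

/-- The Wasserstein distance `W₁(μ₁, μ₂)` with respect to the combinatorial distance of `G`:
the infimum of the total transport cost over all transport plans from `μ₁` to `μ₂`. -/
def W1 {V : Type*} [Fintype V] (G : SimpleGraph V) (μ₁ μ₂ : V → ℝ) : ℝ :=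
  sInf {c : ℝ | ∃ π : V → V → ℝ,
    (∀ x y, 0 ≤ π x y ∧ π x y ≤ 1) ∧
    (∀ x, ∑ y, π x y = μ₁ x) ∧
    (∀ y, ∑ x, π x y = μ₂ y) ∧
    c = ∑ x, ∑ y, (G.dist x y : ℝ) * π x y}

/-- The `p`-Ollivier-Ricci curvature `κ_p(x,y) = 1 - W₁(μ_x^p, μ_y^p)`. -/
def kappa {V : Type*} [Fintype V] (G : SimpleGraph V) (p : ℝ) (x y : V) : ℝ :=
  1 - W1 G (mu G p x) (mu G p y)

/-- The Lin-Lu-Yau curvature `κ_LLY(x,y) = lim_{p→1} κ_p(x,y)/(1-p)`. -/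
def kappaLLY {V : Type*} [Fintype V] (G : SimpleGraph V) (x y : V) : ℝ :=
  Filter.limUnder (nhdsWithin 1 (Set.Iio 1)) (fun p => kappa G p x y / (1 - p))

/-- `G` is Bonnet-Myers sharp if the infimum of `κ_LLY` over the edges equals `2/diam(G)`. -/
def BMSharp {V : Type*} [Fintype V] (G : SimpleGraph V) : Prop :=
  sInf {r : ℝ | ∃ x y, G.Adj x y ∧ r = kappaLLY G x y} = 2 / (diam G : ℝ)

/-- `G` is obtained from the complete graph on its vertex set by deleting a matching
(a set of pairwise disjoint edges, encoded as a symmetric irreflexive relation in which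
every vertex has at most one partner). -/
def IsMatchingDeletionOfComplete {V : Type*} (G : SimpleGraph V) : Prop :=
  ∃ M : V → V → Prop, Symmetric M ∧ (∀ x, ¬ M x x) ∧
    (∀ x y z, M x y → M x z → y = z) ∧
    (∀ x y, G.Adj x y ↔ x ≠ y ∧ ¬ M x y)

/-- The graph `G(a,b)` on `2a+b` vertices `u_1, …, u_{2a}, v_1, …, v_b` (encoded as
`Fin (2a+b)`, with `u_i` the index `i-1` and `v_j` the index `2a+j-1`), in which two distinct
vertices are adjacent unless they form a pair `{u_{2i-1}, u_{2i}}`, i.e. `G(a,b)` is the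
complete graph `K_{2a+b}` with a matching of size `a` deleted. -/
def Gab (a b : ℕ) : SimpleGraph (Fin (2*a+b)) where
  Adj x y := x ≠ y ∧ ¬((x : ℕ) < 2*a ∧ (y : ℕ) < 2*a ∧ (x : ℕ)/2 = (y : ℕ)/2)
  symm := by
    constructor
    intro x y h
    exact ⟨h.1.symm, fun hc => h.2 ⟨hc.2.1, hc.1, hc.2.2.symm⟩⟩
  loopless := by constructor; intro x h; exact h.1 rfl

/-- The antitree `AT(a_1, …, a_N)` on the disjoint union of sets `V_1, …, V_N` with
`|V_k| = a_k` (0-indexed here: `V_k` is `Fin (a k)` for `k : Fin N`): two distinct vertices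
are adjacent iff they lie in the same set or in consecutive sets. -/
def antitree (N : ℕ) (a : Fin N → ℕ) : SimpleGraph (Σ k : Fin N, Fin (a k)) where
  Adj x y := x ≠ y ∧
    ((x.1 : ℕ) = (y.1 : ℕ) ∨ (x.1 : ℕ) + 1 = (y.1 : ℕ) ∨ (y.1 : ℕ) + 1 = (x.1 : ℕ))
  symm := by
    constructor
    intro x y h
    refine ⟨h.1.symm, ?_⟩
    rcases h.2 with h2 | h2 | h2
    · exact Or.inl h2.symm
    · exact Or.inr (Or.inr h2)
    · exact Or.inr (Or.inl h2)
  loopless := by constructor; intro x h; exact h.1 rfl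

/-!
Convexity of `W₁` makes `p ↦ κ_p(x, y)` concave, and `κ_1(x, y) = 0`, so `κ_p(x, y) / (1 - p)` is
monotone in `p` and converges as `p → 1`. Testing the Kantorovich inequality against a
`1`-Lipschitz function `f` with `f x - f y = 1` bounds it by `Δf(y) - Δf(x)`, hence
`κ_LLY(x, y) ≤ Δf(y) - Δf(x)`.

If `A` consists of neighbours of `x` alone, `B` of neighbours of `y` alone, and no edge joins `A`
to `B`, then `f = 1_{A ∪ {x}} - 1_B` is such a function, and it yields
`κ_LLY(x, y) ≤ 1 + (1 - |B|) / d_y - |A| / d_x`. When `κ_LLY(x, y) ≥ 1` and `d_x ≤ d_y` this forces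
`|A| + |B| ≤ 1`. Taking `B = ∅` gives uniqueness of `x'`. If `x'` exists, then comparing degrees
`y` also has a neighbour `y'` of its own, and `A = {x'}`, `B = {y'}` shows that `x' ∼ y'`.
-/

section Lipschitz

variable {V : Type*} {G : SimpleGraph V}

/-- `f` is `1`-Lipschitz for the combinatorial distance of `G`. -/
def IsOneLipschitz (G : SimpleGraph V) (f : V → ℝ) : Prop :=
  ∀ a b, f a - f b ≤ G.dist a b

lemma isOneLipschitz_dist (hG : G.Connected) (y : V) :
    IsOneLipschitz G fun z => G.dist z y := by
  intro a b
  refine sub_le_iff_le_add.2 ?_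
  dsimp only
  exact_mod_cast hG.dist_triangle

/-- The difference `1_P - 1_N` of two indicator functions, used as a test function in the
Kantorovich inequality. -/
def indicatorDiff (P N : Finset V) (z : V) : ℝ :=
  (if z ∈ P then 1 else 0) - (if z ∈ N then 1 else 0)

lemma sum_indicatorDiff (P N T : Finset V) :
    ∑ z ∈ T, indicatorDiff P N z = #(T ∩ P) - #(T ∩ N) := by
  simp [indicatorDiff, sum_ite_mem]

lemma isOneLipschitz_indicatorDiff (hG : G.Connected) {P N : Finset V}
    (hPN : ∀ a ∈ P, ∀ b ∈ N, ¬ G.Adj a b) : IsOneLipschitz G (indicatorDiff P N) := by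
  intro a b
  rcases eq_or_ne a b with rfl | hab
  · simp
  have one_le_dist : (1 : ℝ) ≤ G.dist a b := by exact_mod_cast hG.pos_dist_of_ne hab
  by_cases hmem : a ∈ P ∧ b ∈ N
  · have two_le_dist : (2 : ℝ) ≤ G.dist a b := by
      exact_mod_cast hG.one_lt_dist_of_ne_of_not_adj hab (hPN a hmem.1 b hmem.2)
    have diff_le_two : indicatorDiff P N a - indicatorDiff P N b ≤ 2 := by
      unfold indicatorDiff
      split_ifs <;> norm_num
    exact diff_le_two.trans two_le_dist
  · have diff_le_one : indicatorDiff P N a - indicatorDiff P N b ≤ 1 := by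
      unfold indicatorDiff
      split_ifs <;> norm_num
      exact hmem ⟨‹_›, ‹_›⟩
    exact diff_le_one.trans one_le_dist

end Lipschitz

section Transport

variable {V : Type*} [Fintype V] {G : SimpleGraph V} {μ₁ μ₂ : V → ℝ} {π : V → V → ℝ}

/-- `π` is a transport plan from `μ₁` to `μ₂`, one of the competitors in the definition of `W1`. -/
structure IsTransportPlan (π : V → V → ℝ) (μ₁ μ₂ : V → ℝ) : Prop where
  mem_Icc : ∀ x y, 0 ≤ π x y ∧ π x y ≤ 1
  sum_right : ∀ x, ∑ y, π x y = μ₁ x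
  sum_left : ∀ y, ∑ x, π x y = μ₂ y

/-- The total cost of the transport plan `π` for the combinatorial distance of `G`. -/
def transportCost (G : SimpleGraph V) (π : V → V → ℝ) : ℝ :=
  ∑ x, ∑ y, (G.dist x y : ℝ) * π x y

lemma transportCost_nonneg (hπ : IsTransportPlan π μ₁ μ₂) : 0 ≤ transportCost G π :=
  sum_nonneg fun x _ => sum_nonneg fun y _ => mul_nonneg (Nat.cast_nonneg _) (hπ.mem_Icc x y).1

lemma transportCost_smul_add_smul (s t : ℝ) (π ρ : V → V → ℝ) :
    transportCost G (s • π + t • ρ) = s * transportCost G π + t * transportCost G ρ := by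
  simp only [transportCost, mul_sum, ← sum_add_distrib, Pi.add_apply, Pi.smul_apply, smul_eq_mul]
  refine sum_congr rfl fun x _ => sum_congr rfl fun y _ => ?_
  ring

lemma IsTransportPlan.smul_add_smul {ν₁ ν₂ : V → ℝ} {ρ : V → V → ℝ}
    (hπ : IsTransportPlan π μ₁ μ₂) (hρ : IsTransportPlan ρ ν₁ ν₂) {s t : ℝ} (hs : 0 ≤ s)
    (ht : 0 ≤ t) (hst : s + t = 1) :
    IsTransportPlan (s • π + t • ρ) (s • μ₁ + t • ν₁) (s • μ₂ + t • ν₂) where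
  mem_Icc x y := convex_Icc (0 : ℝ) 1 (hπ.mem_Icc x y) (hρ.mem_Icc x y) hs ht hst
  sum_right x := by simp [sum_add_distrib, ← mul_sum, hπ.sum_right, hρ.sum_right]
  sum_left y := by simp [sum_add_distrib, ← mul_sum, hπ.sum_left, hρ.sum_left]

lemma isTransportPlan_mul (h₁ : μ₁ ∈ stdSimplex ℝ V) (h₂ : μ₂ ∈ stdSimplex ℝ V) :
    IsTransportPlan (fun x y => μ₁ x * μ₂ y) μ₁ μ₂ where
  mem_Icc x y :=
    have hx := mem_Icc_of_mem_stdSimplex h₁ x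
    have hy := mem_Icc_of_mem_stdSimplex h₂ y
    ⟨mul_nonneg hx.1 hy.1, mul_le_one₀ hx.2 hy.1 hy.2⟩
  sum_right x := by rw [← mul_sum, h₂.2, mul_one]
  sum_left y := by rw [← sum_mul, h₁.2, one_mul]

lemma W1_eq_sInf_image :
    W1 G μ₁ μ₂ = sInf (transportCost G '' {π | IsTransportPlan π μ₁ μ₂}) := by
  unfold W1
  congr 1
  ext c
  exact ⟨fun ⟨π, h, h₁, h₂, hc⟩ => ⟨π, ⟨h, h₁, h₂⟩, hc.symm⟩,
    fun ⟨π, hπ, hc⟩ => ⟨π, hπ.mem_Icc, hπ.sum_right, hπ.sum_left, hc.symm⟩⟩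

lemma W1_le_transportCost (hπ : IsTransportPlan π μ₁ μ₂) : W1 G μ₁ μ₂ ≤ transportCost G π := by
  rw [W1_eq_sInf_image]
  refine csInf_le ⟨0, ?_⟩ (Set.mem_image_of_mem _ hπ)
  rintro _ ⟨ρ, hρ, rfl⟩
  exact transportCost_nonneg hρ

lemma le_W1 (h₁ : μ₁ ∈ stdSimplex ℝ V) (h₂ : μ₂ ∈ stdSimplex ℝ V) {c : ℝ}
    (hc : ∀ π, IsTransportPlan π μ₁ μ₂ → c ≤ transportCost G π) : c ≤ W1 G μ₁ μ₂ := by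
  rw [W1_eq_sInf_image]
  exact le_csInf ⟨_, Set.mem_image_of_mem _ (isTransportPlan_mul h₁ h₂)⟩
    (Set.forall_mem_image.2 hc)

lemma exists_transportCost_lt (h₁ : μ₁ ∈ stdSimplex ℝ V) (h₂ : μ₂ ∈ stdSimplex ℝ V) {c : ℝ}
    (hc : W1 G μ₁ μ₂ < c) : ∃ π, IsTransportPlan π μ₁ μ₂ ∧ transportCost G π < c := by
  by_contra! h
  exact hc.not_ge (le_W1 h₁ h₂ h)

lemma convexOn_W1 (G : SimpleGraph V) :
    ConvexOn ℝ (stdSimplex ℝ V ×ˢ stdSimplex ℝ V) fun μ => W1 G μ.1 μ.2 := by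
  refine ⟨(convex_stdSimplex ℝ V).prod (convex_stdSimplex ℝ V), ?_⟩
  intro μ hμ ν hν s t hs ht hst
  refine le_of_forall_pos_le_add fun ε hε => ?_
  obtain ⟨π, hπ, hπ_lt⟩ := exists_transportCost_lt (G := G) hμ.1 hμ.2 (lt_add_of_pos_right _ hε)
  obtain ⟨ρ, hρ, hρ_lt⟩ := exists_transportCost_lt (G := G) hν.1 hν.2 (lt_add_of_pos_right _ hε)
  calc W1 G (s • μ + t • ν).1 (s • μ + t • ν).2
      ≤ transportCost G (s • π + t • ρ) :=
        W1_le_transportCost (hπ.smul_add_smul hρ hs ht hst)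
    _ = s * transportCost G π + t * transportCost G ρ := transportCost_smul_add_smul s t π ρ
    _ ≤ s * (W1 G μ.1 μ.2 + ε) + t * (W1 G ν.1 ν.2 + ε) := by gcongr
    _ = s * W1 G μ.1 μ.2 + t * W1 G ν.1 ν.2 + (s + t) * ε := by ring
    _ = s • W1 G μ.1 μ.2 + t • W1 G ν.1 ν.2 + ε := by rw [hst, one_mul, smul_eq_mul, smul_eq_mul]

lemma IsTransportPlan.sum_mul_sub_sum_mul (hπ : IsTransportPlan π μ₁ μ₂) (f : V → ℝ) :
    ∑ z, f z * μ₁ z - ∑ z, f z * μ₂ z = ∑ x, ∑ y, (f x - f y) * π x y := by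
  simp only [← hπ.sum_right, ← hπ.sum_left, mul_sum, sub_mul, sum_sub_distrib]
  rw [sum_comm (f := fun x y => f y * π x y)]

lemma IsOneLipschitz.sum_mul_sub_sum_mul_le_W1 {f : V → ℝ} (hf : IsOneLipschitz G f)
    (h₁ : μ₁ ∈ stdSimplex ℝ V) (h₂ : μ₂ ∈ stdSimplex ℝ V) :
    ∑ z, f z * μ₁ z - ∑ z, f z * μ₂ z ≤ W1 G μ₁ μ₂ := by
  refine le_W1 h₁ h₂ fun π hπ => ?_
  rw [hπ.sum_mul_sub_sum_mul]
  exact sum_le_sum fun x _ => sum_le_sum fun y _ =>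
    mul_le_mul_of_nonneg_right (hf x y) (hπ.mem_Icc x y).1

end Transport

section Curvature

variable {V : Type*} [Fintype V] {G : SimpleGraph V} {x y : V} {p : ℝ} {f : V → ℝ}

lemma deg_pos_of_adj (hxy : G.Adj x y) : 0 < deg G x :=
  card_pos.2 ⟨y, by simpa using hxy⟩

/-- The normalized Laplacian `Δf(x) = (1 / d_x) ∑_{z ∼ x} f z - f x`, the generator of the random
walk; at an isolated vertex division by zero makes it `-f x`. -/
def laplacian (G : SimpleGraph V) (f : V → ℝ) (x : V) : ℝ :=
  (∑ z with G.Adj x z, f z) / deg G x - f x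

lemma sum_mul_mu (G : SimpleGraph V) (f : V → ℝ) (p : ℝ) (x : V) :
    ∑ z, f z * mu G p x z = f x + (1 - p) * laplacian G f x := by
  have mul_mu : ∀ z, f z * mu G p x z =
      (if z = x then p * f z else 0) + (1 - p) / deg G x * (if G.Adj x z then f z else 0) := by
    intro z
    rcases eq_or_ne z x with rfl | hz
    · simp [mu, mul_comm]
    · simp [mu, hz, mul_comm]
  simp only [mul_mu, sum_add_distrib, ← mul_sum, sum_ite_eq', mem_univ, if_true, sum_filter,
    laplacian]
  ring

lemma laplacian_const (hx : 0 < deg G x) (c : ℝ) : laplacian G (fun _ => c) x = 0 := by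
  have hx' : (deg G x : ℝ) ≠ 0 := by positivity
  rw [laplacian, sum_const, nsmul_eq_mul]
  exact sub_eq_zero.2 (mul_div_cancel_left₀ c hx')

lemma mu_mem_stdSimplex (hx : 0 < deg G x) (hp : p ∈ Set.Icc 0 1) :
    mu G p x ∈ stdSimplex ℝ V := by
  refine ⟨fun z => ?_, ?_⟩
  · have := hp.1
    have := sub_nonneg.2 hp.2
    unfold mu
    split_ifs <;> positivity
  · simpa [laplacian_const hx] using sum_mul_mu G (fun _ => 1) p x

lemma mu_smul_add_smul {s t : ℝ} (hst : s + t = 1) (p q : ℝ) :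
    mu G (s • p + t • q) x = s • mu G p x + t • mu G q x := by
  obtain rfl : t = 1 - s := by linarith
  ext z
  simp only [mu, Pi.add_apply, Pi.smul_apply, smul_eq_mul]
  split_ifs <;> ring

lemma concaveOn_kappa (hx : 0 < deg G x) (hy : 0 < deg G y) :
    ConcaveOn ℝ (Set.Icc 0 1) fun p => kappa G p x y := by
  refine (concaveOn_const 1 (convex_Icc 0 1)).sub ⟨convex_Icc 0 1, ?_⟩
  intro p hp q hq s t hs ht hst
  have h := (convexOn_W1 G).2
    (Set.mk_mem_prod (mu_mem_stdSimplex hx hp) (mu_mem_stdSimplex hy hp))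
    (Set.mk_mem_prod (mu_mem_stdSimplex hx hq) (mu_mem_stdSimplex hy hq)) hs ht hst
  simpa only [mu_smul_add_smul hst, Prod.smul_mk, Prod.mk_add_mk] using h

lemma W1_mu_one (hG : G.Connected) (hx : 0 < deg G x) (hy : 0 < deg G y) :
    W1 G (mu G 1 x) (mu G 1 y) = G.dist x y := by
  have h₁ := mu_mem_stdSimplex hx (Set.right_mem_Icc.2 zero_le_one)
  have h₂ := mu_mem_stdSimplex hy (Set.right_mem_Icc.2 zero_le_one)
  have sum_mul_mu_one : ∀ (f : V → ℝ) (v : V), ∑ z, f z * mu G 1 v z = f v := by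
    intro f v
    rw [sum_mul_mu, sub_self, zero_mul, add_zero]
  apply le_antisymm
  · calc W1 G (mu G 1 x) (mu G 1 y)
        ≤ transportCost G fun a b => mu G 1 x a * mu G 1 y b :=
          W1_le_transportCost (isTransportPlan_mul h₁ h₂)
      _ = ∑ a, (∑ b, G.dist a b * mu G 1 y b) * mu G 1 x a := by
          simp only [transportCost, sum_mul, mul_assoc, mul_comm (mu G 1 x _)]
      _ = G.dist x y := by simp only [sum_mul_mu_one]
  · simpa [sum_mul_mu_one] using (isOneLipschitz_dist hG y).sum_mul_sub_sum_mul_le_W1 h₁ h₂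

lemma kappa_one (hG : G.Connected) (hxy : G.Adj x y) : kappa G 1 x y = 0 := by
  rw [kappa, W1_mu_one hG (deg_pos_of_adj hxy) (deg_pos_of_adj hxy.symm),
    SimpleGraph.dist_eq_one_iff_adj.2 hxy, Nat.cast_one, sub_self]

lemma kappa_div_le_laplacian_sub (hx : 0 < deg G x) (hy : 0 < deg G y) (hf : IsOneLipschitz G f)
    (hfxy : f x - f y = 1) (hp : p ∈ Set.Ico 0 1) :
    kappa G p x y / (1 - p) ≤ laplacian G f y - laplacian G f x := by
  have hp' := Set.Ico_subset_Icc_self hp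
  have kantorovich :=
    hf.sum_mul_sub_sum_mul_le_W1 (mu_mem_stdSimplex hx hp') (mu_mem_stdSimplex hy hp')
  rw [sum_mul_mu, sum_mul_mu] at kantorovich
  rw [div_le_iff₀ (sub_pos.2 hp.2), kappa]
  linarith

lemma monotoneOn_kappa_div (hG : G.Connected) (hxy : G.Adj x y) :
    MonotoneOn (fun p => kappa G p x y / (1 - p)) (Set.Ico 0 1) := by
  have slope_eq : ∀ p, kappa G p x y / (1 - p) =
      (-kappa G p x y - -kappa G 1 x y) / (p - 1) := by
    intro p
    rw [kappa_one hG hxy, neg_zero, sub_zero, ← neg_sub 1 p, neg_div_neg_eq]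
  intro p hp q hq hpq
  simp only [slope_eq]
  exact (concaveOn_kappa (deg_pos_of_adj hxy) (deg_pos_of_adj hxy.symm)).neg.secant_mono
    (Set.right_mem_Icc.2 zero_le_one) (Set.Ico_subset_Icc_self hp) (Set.Ico_subset_Icc_self hq)
    hp.2.ne hq.2.ne hpq

lemma tendsto_kappa_div_kappaLLY (hG : G.Connected) (hxy : G.Adj x y) :
    Filter.Tendsto (fun p => kappa G p x y / (1 - p)) (nhdsWithin 1 (Set.Iio 1))
      (nhds (kappaLLY G x y)) := by
  have dist_sub_dist : (G.dist x y : ℝ) - G.dist y y = 1 := by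
    simp [SimpleGraph.dist_eq_one_iff_adj.2 hxy]
  have bddAbove : BddAbove ((fun p => kappa G p x y / (1 - p)) '' Set.Ioo 0 1) :=
    ⟨_, Set.forall_mem_image.2 fun _ hp => kappa_div_le_laplacian_sub (deg_pos_of_adj hxy)
      (deg_pos_of_adj hxy.symm) (isOneLipschitz_dist hG y) dist_sub_dist
      (Set.Ioo_subset_Ico_self hp)⟩
  exact tendsto_nhds_limUnder
    ⟨_, ((monotoneOn_kappa_div hG hxy).mono Set.Ioo_subset_Ico_self).tendsto_nhdsWithin_Ioo_left
      (Set.nonempty_Ioo.2 zero_lt_one) bddAbove⟩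

lemma kappaLLY_le_laplacian_sub (hG : G.Connected) (hxy : G.Adj x y) (hf : IsOneLipschitz G f)
    (hfxy : f x - f y = 1) : kappaLLY G x y ≤ laplacian G f y - laplacian G f x := by
  refine le_of_tendsto (tendsto_kappa_div_kappaLLY hG hxy) ?_
  filter_upwards [Ioo_mem_nhdsLT (zero_lt_one (α := ℝ))] with p hp
  exact kappa_div_le_laplacian_sub (deg_pos_of_adj hxy) (deg_pos_of_adj hxy.symm) hf hfxy
    (Set.Ioo_subset_Ico_self hp)

lemma BMSharp.two_div_diam_le_kappaLLY (hBM : BMSharp G) (hxy : G.Adj x y) :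
    2 / (diam G : ℝ) ≤ kappaLLY G x y := by
  have finite : {r : ℝ | ∃ x y, G.Adj x y ∧ r = kappaLLY G x y}.Finite :=
    (Set.finite_range fun e : V × V => kappaLLY G e.1 e.2).subset
      fun _ ⟨a, b, _, hr⟩ => ⟨(a, b), hr.symm⟩
  exact hBM.symm.trans_le (csInf_le finite.bddBelow ⟨x, y, hxy, rfl⟩)

end Curvature

section PrivateNeighbors

variable {V : Type*} [Fintype V] {G : SimpleGraph V} {x y : V}

/-- The vertices other than `y` that are adjacent to `x` but not to `y`: the candidates for `x'`
in the theorem, and with `x` and `y` exchanged those for `y'`. -/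
def privateNeighbors (G : SimpleGraph V) (x y : V) : Finset V :=
  {z | z ≠ y ∧ G.Adj x z ∧ ¬ G.Adj y z}

@[simp]
lemma mem_privateNeighbors {z : V} :
    z ∈ privateNeighbors G x y ↔ z ≠ y ∧ G.Adj x z ∧ ¬ G.Adj y z := by
  simp [privateNeighbors]

lemma card_privateNeighbors_le (hxy : G.Adj x y) (hdeg : deg G x ≤ deg G y) :
    #(privateNeighbors G x y) ≤ #(privateNeighbors G y x) := by
  have eq_erase : ∀ u v, privateNeighbors G u v =
      (({z | G.Adj u z} : Finset V) \ ({z | G.Adj v z} : Finset V)).erase v := by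
    intro u v
    ext z
    simp
  rw [eq_erase x y, eq_erase y x, card_erase_of_mem (by simpa using hxy),
    card_erase_of_mem (by simpa using hxy.symm)]
  exact Nat.sub_le_sub_right (card_sdiff_le_card_sdiff_iff.2 hdeg) 1

lemma kappaLLY_le_of_forall_not_adj (hG : G.Connected) (hxy : G.Adj x y) {A B : Finset V}
    (hA : A ⊆ privateNeighbors G x y) (hB : B ⊆ privateNeighbors G y x)
    (hAB : ∀ a ∈ A, ∀ b ∈ B, ¬ G.Adj a b) :
    kappaLLY G x y ≤ 1 + (1 - #B) / deg G y - #A / deg G x := by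
  have hA' := fun z hz => mem_privateNeighbors.1 (@hA z hz)
  have hB' := fun z hz => mem_privateNeighbors.1 (@hB z hz)
  have hlip : IsOneLipschitz G (indicatorDiff (insert x A) B) :=
    isOneLipschitz_indicatorDiff hG
      (forall_mem_insert _ _ _ |>.2 ⟨fun b hb => (hB' b hb).2.2, hAB⟩)
  have value_x : indicatorDiff (insert x A) B x = 1 := by
    have : x ∉ B := fun h => (hB' x h).1 rfl
    simp [indicatorDiff, this]
  have value_y : indicatorDiff (insert x A) B y = 0 := by
    have hyA : y ∉ A := fun h => (hA' y h).1 rfl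
    have hyB : y ∉ B := fun h => G.irrefl (hB' y h).2.1
    simp [indicatorDiff, hyA, hyB, hxy.ne']
  have laplacian_x : laplacian G (indicatorDiff (insert x A) B) x = #A / deg G x - 1 := by
    have inter_A : ({z | G.Adj x z} : Finset V) ∩ insert x A = A := by grind [G.irrefl]
    have inter_B : ({z | G.Adj x z} : Finset V) ∩ B = ∅ := by grind
    rw [laplacian, sum_indicatorDiff, value_x, inter_A, inter_B, card_empty, Nat.cast_zero,
      sub_zero]
  have laplacian_y : laplacian G (indicatorDiff (insert x A) B) y = (1 - #B) / deg G y := by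
    have inter_A : ({z | G.Adj y z} : Finset V) ∩ insert x A = {x} := by grind [hxy.symm]
    have inter_B : ({z | G.Adj y z} : Finset V) ∩ B = B := by grind
    rw [laplacian, sum_indicatorDiff, value_y, inter_A, inter_B, card_singleton, Nat.cast_one,
      sub_zero]
  have := kappaLLY_le_laplacian_sub hG hxy hlip (by rw [value_x, value_y, sub_zero])
  linarith

lemma card_add_card_le_one (hG : G.Connected) (hxy : G.Adj x y) (hκ : 1 ≤ kappaLLY G x y)
    (hdeg : deg G x ≤ deg G y) {A B : Finset V} (hA : A ⊆ privateNeighbors G x y)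
    (hB : B ⊆ privateNeighbors G y x) (hAB : ∀ a ∈ A, ∀ b ∈ B, ¬ G.Adj a b) :
    #A + #B ≤ 1 := by
  have hx : (0 : ℝ) < deg G x := Nat.cast_pos.2 (deg_pos_of_adj hxy)
  have hy : (0 : ℝ) < deg G y := Nat.cast_pos.2 (deg_pos_of_adj hxy.symm)
  have card_div_le : (#A : ℝ) / deg G x ≤ (1 - #B) / deg G y := by
    linarith [kappaLLY_le_of_forall_not_adj hG hxy hA hB hAB]
  have card_B_le : 0 ≤ (1 - #B : ℝ) := by
    have : 0 ≤ (1 - #B : ℝ) / deg G y := le_trans (by positivity) card_div_le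
    simpa using (le_div_iff₀ hy).1 this
  have card_A_le : (#A : ℝ) ≤ 1 - #B := by
    refine (div_le_div_iff_of_pos_right hx).1 (card_div_le.trans ?_)
    gcongr
  exact_mod_cast (by linarith : (#A : ℝ) + #B ≤ 1)

end PrivateNeighbors

theorem stmt6_general {V : Type*} [Fintype V] (G : SimpleGraph V) (hconn : G.Connected) (x y : V)
    (hxy : G.Adj x y) (hκ : 1 ≤ kappaLLY G x y) (hdeg : deg G x ≤ deg G y) :
    (∀ x₁ x₂ : V,
        (x₁ ≠ x ∧ x₁ ≠ y ∧ G.Adj x x₁ ∧ ¬ G.Adj y x₁) →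
        (x₂ ≠ x ∧ x₂ ≠ y ∧ G.Adj x x₂ ∧ ¬ G.Adj y x₂) → x₁ = x₂) ∧
    (∀ x' : V, (x' ≠ x ∧ x' ≠ y ∧ G.Adj x x' ∧ ¬ G.Adj y x') →
        ∃ y' : V, y' ≠ x ∧ y' ≠ y ∧ G.Adj y y' ∧ ¬ G.Adj x y' ∧ G.Adj x' y') := by
  constructor
  · intro x₁ x₂ h₁ h₂
    have card_private_le_one : #(privateNeighbors G x y) ≤ 1 :=
      card_add_card_le_one hconn hxy hκ hdeg Subset.rfl (empty_subset _) (by simp)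
    exact card_le_one.1 card_private_le_one x₁ (mem_privateNeighbors.2 h₁.2) x₂
      (mem_privateNeighbors.2 h₂.2)
  · intro x' h
    have hx' : x' ∈ privateNeighbors G x y := mem_privateNeighbors.2 h.2
    obtain ⟨y', hy'⟩ : (privateNeighbors G y x).Nonempty :=
      card_pos.1 ((card_pos.2 ⟨x', hx'⟩).trans_le (card_privateNeighbors_le hxy hdeg))
    obtain ⟨hy'x, hyy', hxy'⟩ := mem_privateNeighbors.1 hy'
    refine ⟨y', hy'x, hyy'.ne', hyy', hxy', ?_⟩
    by_contra hnadj
    have two_le_one := card_add_card_le_one hconn hxy hκ hdeg (singleton_subset_iff.2 hx')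
      (singleton_subset_iff.2 hy') (by simpa using hnadj)
    simp at two_le_one

/-- In a Bonnet-Myers sharp graph of diameter 2, if `x ∼ y` and `d_x = d_y`,
there is at most one vertex `x' ∉ {x,y}` with `x ∼ x'` and `y ≁ x'`; moreover for any such `x'`
there is `y' ∉ {x,y}` with `y ∼ y'`, `x ≁ y'` and `x' ∼ y'`. -/
theorem stmt6 {V : Type*} [Fintype V] (G : SimpleGraph V) (hconn : G.Connected)
    (hdiam : diam G = 2) (hBM : BMSharp G) (x y : V) (hxy : G.Adj x y)
    (hdeg : deg G x = deg G y) :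
    (∀ x₁ x₂ : V,
        (x₁ ≠ x ∧ x₁ ≠ y ∧ G.Adj x x₁ ∧ ¬ G.Adj y x₁) →
        (x₂ ≠ x ∧ x₂ ≠ y ∧ G.Adj x x₂ ∧ ¬ G.Adj y x₂) → x₁ = x₂) ∧
    (∀ x' : V, (x' ≠ x ∧ x' ≠ y ∧ G.Adj x x' ∧ ¬ G.Adj y x') →
        ∃ y' : V, y' ≠ x ∧ y' ≠ y ∧ G.Adj y y' ∧ ¬ G.Adj x y' ∧ G.Adj x' y') :=
  stmt6_general G hconn x y hxy
    (by simpa [hdiam] using hBM.two_div_diam_le_kappaLLY hxy) hdeg.le
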